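/- arXiv:2005.01410 — 2 statements merged into one kernel-verified Lean document; each statement's English description precedes it below -/
import Mathlib

section
/- Let m and n be positive integers, let U = {1, 2, ..., m+n}, and let t be an integer with m(m+1)/2 ≤ t ≤ m(m+1)/2 + mn; set t* = t − m(m+1)/2. Then the sum, over all m-element subsets X of U whose elements sum to t, of V_X · V_Y (where Y = U \ X is the complement of X in U) equals G(m+1) · G(n+1) · C(mn, t*), where C denotes the binomial coefficient. -/
/-- The Vandermonde product `V_X = ∏_{i<j, i,j ∈ X} (j - i)` of a finite set of naturals. -/
def vand (X : Finset ℕ) : ℤ :=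
  ∏ p ∈ X.offDiag.filter (fun p => p.1 < p.2), ((p.2 : ℤ) - (p.1 : ℤ))

/-- `barnesG m = G(m+1) = 0!·1!···(m−1)!`, the Barnes G-function at `m+1`. -/
def barnesG (m : ℕ) : ℕ := ∏ i ∈ Finset.range m, Nat.factorial i

open Finset Polynomial

theorem vand_image_strictMono {k : ℕ} {w : Fin k → ℕ} (hw : StrictMono w) :
    vand (univ.image w) = ∏ i, ∏ j ∈ Ioi i, ((w j : ℤ) - w i) := by
  rw [vand, Finset.prod_sigma']
  symm
  refine Finset.prod_bij (fun p _ => (w p.1, w p.2)) ?_ ?_ ?_ ?_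
  · rintro ⟨i, j⟩ h
    have h : i < j := by simpa using h
    simp [hw.lt_iff_lt, h, hw.injective.eq_iff, h.ne]
  · rintro ⟨i, j⟩ - ⟨i', j'⟩ - h
    simpa [hw.injective.eq_iff] using h
  · rintro ⟨x, y⟩ h
    simp only [mem_filter, mem_offDiag, mem_image, mem_univ, true_and] at h
    obtain ⟨⟨⟨i, rfl⟩, ⟨j, rfl⟩, -⟩, hij⟩ := h
    exact ⟨⟨i, j⟩, by simpa [hw.lt_iff_lt] using hij, rfl⟩
  · simp

theorem det_descFactorial_eq_vand {k : ℕ} {v : Fin k → ℕ} (hv : StrictMono v) :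
    (Matrix.of fun i j : Fin k => ((v i).descFactorial j : ℤ)).det =
      vand (univ.image fun i => v i + 1) := by
  rw [vand_image_strictMono (w := fun i => v i + 1) (fun i j h => by simpa using hv h)]
  have h := Matrix.det_eval_matrixOfPolynomials_eq_det_vandermonde (fun i => (v i : ℤ))
    (fun i => descPochhammer ℤ i) (fun i => descPochhammer_natDegree ℤ i)
    (fun i => monic_descPochhammer ℤ i)
  simp only [descPochhammer_eval_eq_descFactorial, Matrix.det_vandermonde] at h
  simp [← h]

theorem card_lt_orderEmbOfFin_compl {N m n : ℕ} {S : Finset (Fin N)} (hm : #S = m)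
    (hn : #Sᶜ = n) (i : Fin m) :
    #{j : Fin n | Sᶜ.orderEmbOfFin hn j < S.orderEmbOfFin hm i} + i = S.orderEmbOfFin hm i := by
  set x := S.orderEmbOfFin hm i with hx
  have h1 : ({j : Fin n | Sᶜ.orderEmbOfFin hn j < x} : Finset _).map
      (Sᶜ.orderEmbOfFin hn).toEmbedding = (Iio x).filter (· ∉ S) := by
    ext y
    simp only [mem_map, mem_filter, mem_univ, true_and, mem_Iio, RelEmbedding.coe_toEmbedding]
    constructor
    · rintro ⟨j, hj, rfl⟩
      exact ⟨hj, mem_compl.1 (Sᶜ.orderEmbOfFin_mem hn j)⟩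
    · rintro ⟨hy, hS⟩
      have : y ∈ Set.range (Sᶜ.orderEmbOfFin hn) := by simpa using hS
      obtain ⟨j, rfl⟩ := this
      exact ⟨j, hy, rfl⟩
  have h2 : (Iio i).map (S.orderEmbOfFin hm).toEmbedding = (Iio x).filter (· ∈ S) := by
    ext y
    simp only [mem_map, mem_filter, mem_Iio, RelEmbedding.coe_toEmbedding]
    constructor
    · rintro ⟨j, hj, rfl⟩
      exact ⟨by simpa [hx] using hj, S.orderEmbOfFin_mem hm j⟩
    · rintro ⟨hy, hS⟩
      have : y ∈ Set.range (S.orderEmbOfFin hm) := by simpa using hS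
      obtain ⟨j, rfl⟩ := this
      exact ⟨j, by simpa [hx] using hy, rfl⟩
  have h3 := Finset.card_filter_add_card_filter_not (s := Iio x) (· ∈ S)
  rw [← h1, ← h2, card_map, card_map, Fin.card_Iio, Fin.card_Iio] at h3
  omega

theorem coe_sum_eq_sum_orderEmbOfFin {N k : ℕ} {S : Finset (Fin N)} (h : #S = k) :
    ∑ x ∈ S, (x : ℕ) = ∑ i, (S.orderEmbOfFin h i : ℕ) := by
  conv_lhs => rw [← Finset.image_orderEmbOfFin_univ S h]
  exact Finset.sum_image fun _ _ _ _ h' => (S.orderEmbOfFin h).injective h'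

theorem sign_finSumEquivOfFinset {m n : ℕ} {S : Finset (Fin (m + n))} (hm : #S = m)
    (hn : #Sᶜ = n) :
    (Equiv.Perm.sign ((finSumEquivOfFinset hm hn).trans finSumFinEquiv.symm) : ℤ) *
      (-1) ^ (∑ i ∈ range m, i) = (-1) ^ (∑ x ∈ S, (x : ℕ)) := by
  have hsign : Equiv.Perm.sign ((finSumEquivOfFinset hm hn).trans finSumFinEquiv.symm) =
      Equiv.Perm.sign (finSumFinEquiv.symm.trans (finSumEquivOfFinset hm hn)) := by
    rw [← Equiv.Perm.sign_symm_trans_trans _ (finSumFinEquiv (m := m) (n := n))]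
    congr 1
    ext x; simp
  rw [hsign, Equiv.Perm.sign_eq_prod_prod_Iio]
  have hIio : ∀ (j : Fin (m + n)) (f : Fin (m + n) → ℤˣ),
      ∏ i ∈ Iio j, f i = ∏ i, if i < j then f i else 1 := by
    intro j f
    rw [← Finset.prod_filter]
    congr 1; ext; simp
  simp only [hIio, Fin.prod_univ_add]
  have h1 : ∀ i j : Fin m, (if Fin.castAdd n i < Fin.castAdd n j then
      (if S.orderEmbOfFin hm i < S.orderEmbOfFin hm j then (1 : ℤˣ) else -1) else 1) = 1 := by
    intro i j
    by_cases h : i < j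
    · rw [if_pos ((S.orderEmbOfFin hm).strictMono h), ite_self]
    · exact if_neg h
  have h2 : ∀ i j : Fin n, (if Fin.natAdd m i < Fin.natAdd m j then
      (if Sᶜ.orderEmbOfFin hn i < Sᶜ.orderEmbOfFin hn j then (1 : ℤˣ) else -1) else 1) = 1 := by
    intro i j
    split_ifs with h h' <;> simp_all
  have h3 : ∀ (i : Fin n) (j : Fin m), ¬ (Fin.natAdd m i < Fin.castAdd n j) := by
    intro i j; simp [Fin.lt_def]; omega
  have h4 : ∀ (i : Fin m) (j : Fin n), Fin.castAdd n i < Fin.natAdd m j := by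
    intro i j; simp [Fin.lt_def]; omega
  simp only [Equiv.trans_apply, finSumFinEquiv_symm_apply_castAdd,
    finSumFinEquiv_symm_apply_natAdd, finSumEquivOfFinset_inl, finSumEquivOfFinset_inr, h1, h2, h3,
    h4, if_true, if_false, prod_const_one, one_mul, mul_one]
  rw [prod_comm, coe_sum_eq_sum_orderEmbOfFin hm, ← Finset.prod_pow_eq_pow_sum,
    ← Finset.prod_pow_eq_pow_sum, prod_range]
  push_cast
  rw [← prod_mul_distrib]
  refine prod_congr rfl fun i _ => ?_
  rw [← card_lt_orderEmbOfFin_compl hm hn i, pow_add]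
  congr 1
  rw [← Finset.prod_const, Finset.prod_filter]
  refine prod_congr rfl fun j _ => ?_
  have hne : S.orderEmbOfFin hm i ≠ Sᶜ.orderEmbOfFin hn j := by
    intro h
    have := Sᶜ.orderEmbOfFin_mem hn j
    rw [← h, mem_compl] at this
    exact this (S.orderEmbOfFin_mem hm i)
  rcases lt_or_gt_of_ne hne with h | h
  · simp [h, h.not_gt]
  · simp [h, h.not_gt]

/-- Laplace expansion along a block of `m` rows: `f S` is the signed product of the two
complementary minors on the columns `S` and `Sᶜ`. -/
theorem det_fromRows_laplace {α R : Type*} [Fintype α] [LinearOrder α] [CommRing R] {m n : ℕ}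
    (e : Fin m ⊕ Fin n ≃ α) (A : Matrix (Fin m) α R) (B : Matrix (Fin n) α R)
    (f : Finset α → R)
    (hf : ∀ (S : Finset α) (hm : #S = m) (hn : #Sᶜ = n), f S =
      (Equiv.Perm.sign ((finSumEquivOfFinset hm hn).trans e.symm) : ℤ) *
        ((A.submatrix id (S.orderEmbOfFin hm)).det *
          (B.submatrix id (Sᶜ.orderEmbOfFin hn)).det)) :
    ((Matrix.fromRows A B).submatrix id e).det = ∑ S ∈ powersetCard m univ, f S := by
  have hcard : Fintype.card α = m + n := by rw [← Fintype.card_congr e]; simp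
  rw [← Matrix.det_transpose, Matrix.det_apply']
  rw [← Finset.sum_fiberwise_of_maps_to (t := powersetCard m (univ : Finset α))
    (g := fun σ : Equiv.Perm (Fin m ⊕ Fin n) => univ.image fun i : Fin m => e (σ (Sum.inl i)))]
  swap
  · intro σ _
    rw [mem_powersetCard_univ, Finset.card_image_of_injective _ fun i j h => by simpa using h]
    simp
  refine sum_congr rfl fun S hS => ?_
  have hm : #S = m := by simpa using hS
  have hn : #Sᶜ = n := by rw [card_compl]; omega
  rw [hf S hm hn, ← Matrix.det_transpose (A.submatrix _ _), ← Matrix.det_transpose (B.submatrix _ _),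
    Matrix.det_apply', Matrix.det_apply', sum_mul_sum, ← sum_product', mul_sum]
  symm
  set σS := (finSumEquivOfFinset hm hn).trans e.symm with hσS
  have hinl : ∀ i, e (σS (Sum.inl i)) = S.orderEmbOfFin hm i := by simp [hσS]
  have hinr : ∀ i, e (σS (Sum.inr i)) = Sᶜ.orderEmbOfFin hn i := by simp [hσS]
  refine Finset.sum_bij (fun τ _ => σS * Equiv.Perm.sumCongr τ.1 τ.2) ?_ ?_ ?_ ?_
  · rintro ⟨τ, ρ⟩ -
    simp only [mem_filter, mem_univ, true_and, Equiv.Perm.mul_apply, Equiv.Perm.sumCongr_apply,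
      Sum.map_inl, hinl]
    conv_rhs => rw [← Finset.image_orderEmbOfFin_univ S hm]
    ext x
    simp only [mem_image, mem_univ, true_and]
    exact τ.surjective.exists (p := fun i => S.orderEmbOfFin hm i = x) |>.symm
  · rintro ⟨τ, ρ⟩ - ⟨τ', ρ'⟩ - h
    exact Equiv.Perm.sumCongrHom_injective (mul_left_cancel h)
  · intro σ hσ
    simp only [mem_filter, mem_univ, true_and] at hσ
    have : σS⁻¹ * σ ∈ (Equiv.Perm.sumCongrHom (Fin m) (Fin n)).range := by
      apply Equiv.Perm.mem_sumCongrHom_range_of_perm_mapsTo_inl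
      rintro _ ⟨i, rfl⟩
      have hi : e (σ (Sum.inl i)) ∈ S := by rw [← hσ]; simp
      have : e (σ (Sum.inl i)) ∈ Set.range (S.orderEmbOfFin hm) := by simpa using hi
      obtain ⟨j, hj⟩ := this
      rw [← hinl, e.injective.eq_iff] at hj
      exact ⟨j, by rw [Equiv.Perm.mul_apply, ← hj]; simp⟩
    obtain ⟨⟨τ, ρ⟩, h⟩ := this
    refine ⟨(τ, ρ), mem_univ _, ?_⟩
    rw [← mul_inv_cancel_left σS σ, ← h]; rfl
  · rintro ⟨τ, ρ⟩ -
    simp only [Fintype.prod_sum_type, Matrix.transpose_apply, Matrix.submatrix_apply, id,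
      Matrix.fromRows_apply_inl, Matrix.fromRows_apply_inr, Equiv.Perm.mul_apply,
      Equiv.Perm.sumCongr_apply, Sum.map_inl, Sum.map_inr, hinl, hinr, Equiv.Perm.sign_mul,
      Equiv.Perm.sign_sumCongr]
    push_cast
    ring

/-- Confluent Vandermonde determinant with nodes `q` and `1`. -/
theorem det_confluent_vandermonde {R : Type*} [CommRing R] (m n : ℕ) (q : R) :
    ((Matrix.fromRows
      (Matrix.of fun (a : Fin m) (i : Fin (m + n)) => q ^ (i - a : ℕ) * ((i : ℕ).choose a : R))
      (Matrix.of fun (b : Fin n) (i : Fin (m + n)) => ((i : ℕ).choose b : R))).submatrix id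
        finSumFinEquiv).det = (1 - q) ^ (m * n) := by
  nontriviality R
  set M := (Matrix.fromRows
      (Matrix.of fun (a : Fin m) (i : Fin (m + n)) => q ^ (i - a : ℕ) * ((i : ℕ).choose a : R))
      (Matrix.of fun (b : Fin n) (i : Fin (m + n)) => ((i : ℕ).choose b : R)))
  let p : Fin m ⊕ Fin n → R[X] :=
    Sum.elim (fun a => (X - C q) ^ (a : ℕ)) (fun b => (X - C q) ^ m * (X - C 1) ^ (b : ℕ))
  have hmonic : ∀ s, (p s).Monic := by
    rintro (a | b)
    · exact (monic_X_sub_C q).pow _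
    · exact ((monic_X_sub_C q).pow _).mul ((monic_X_sub_C 1).pow _)
  have hdeg : ∀ s, (p s).natDegree = finSumFinEquiv s := by
    rintro (a | b)
    · simp only [p, Sum.elim_inl]
      rw [(monic_X_sub_C q).natDegree_pow]; simp
    · simp only [p, Sum.elim_inr]
      rw [((monic_X_sub_C q).pow _).natDegree_mul ((monic_X_sub_C 1).pow _),
        (monic_X_sub_C q).natDegree_pow, (monic_X_sub_C 1).natDegree_pow, natDegree_X_sub_C,
        natDegree_X_sub_C]
      simp
  let W : Matrix (Fin (m + n)) (Fin (m + n)) R :=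
    Matrix.of fun i j => (p (finSumFinEquiv.symm j)).coeff i
  have hW : W.det = 1 := Matrix.det_matrixOfPolynomials _ (fun i => by simp [hdeg])
    fun i => hmonic _
  have htaylor : ∀ (r : R) (k : ℕ) (s), ∑ i : Fin (m + n), r ^ (i - k : ℕ) *
      ((i : ℕ).choose k : R) * (p s).coeff i = (taylor r (p s)).coeff k := by
    intro r k s
    conv_rhs => rw [(p s).as_sum_range_C_mul_X_pow' (n := m + n)
      (by rw [hdeg]; exact Fin.is_lt _)]
    rw [map_sum, finsetSum_coeff, Finset.sum_range]
    refine sum_congr rfl fun i _ => ?_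
    rw [taylor_mul, taylor_C, taylor_pow, taylor_X, coeff_C_mul, coeff_X_add_C_pow]
    ring
  have hprod : M.submatrix id finSumFinEquiv * W.submatrix finSumFinEquiv finSumFinEquiv =
      Matrix.fromBlocks 1 0
        (Matrix.of fun (b : Fin n) (a : Fin m) => (taylor 1 (p (Sum.inl a))).coeff b)
        (Matrix.of fun (b c : Fin n) => (taylor 1 (p (Sum.inr c))).coeff b) := by
    rw [Matrix.submatrix_mul_equiv]
    ext s t
    have key : (M * W).submatrix id finSumFinEquiv s t = ∑ i, M s i * (p t).coeff i := by
      simp [Matrix.mul_apply, W]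
    rw [key]
    rcases s with a | b
    · have : ∑ i, M (Sum.inl a) i * (p t).coeff i = (taylor q (p t)).coeff a := by
        rw [← htaylor]; rfl
      rw [this]
      rcases t with c | d
      · simp [p, taylor_pow, coeff_X_pow, Matrix.one_apply, Fin.ext_iff]
      · simp [p, taylor_pow, taylor_mul, coeff_X_pow_mul']
    · have : ∑ i, M (Sum.inr b) i * (p t).coeff i = (taylor 1 (p t)).coeff b := by
        rw [← htaylor]; simp [M]
      rw [this]
      rcases t with c | d <;> rfl
  have hlower : (Matrix.of fun (b c : Fin n) => (taylor 1 (p (Sum.inr c))).coeff b).det =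
      (1 - q) ^ (m * n) := by
    have hentry : ∀ b c : Fin n, (taylor 1 (p (Sum.inr c))).coeff b =
        if c ≤ b then ((X + C (1 - q)) ^ m : R[X]).coeff (b - c : ℕ) else 0 := by
      intro b c
      have : taylor 1 (p (Sum.inr c)) = (X + C (1 - q)) ^ m * X ^ (c : ℕ) := by
        simp only [p, Sum.elim_inr, taylor_mul, taylor_pow, map_sub, taylor_X, taylor_C]
        ring
      rw [this, coeff_mul_X_pow']
      rfl
    rw [Matrix.det_of_isLowerTriangular]
    · simp only [Matrix.of_apply, hentry, coeff_X_add_C_pow]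
      simp [← pow_mul]
    · intro b c h
      have h : b < c := by simpa using h
      simp [hentry, h.not_ge]
  have := congrArg Matrix.det hprod
  rw [Matrix.det_mul, Matrix.det_submatrix_equiv_self, hW, mul_one,
    Matrix.det_fromBlocks_zero₁₂, Matrix.det_one, one_mul, hlower] at this
  exact this

/-- The embedding `x ↦ x + 1` of `Fin N` into `ℕ`, with range `{1, …, N}`. -/
def valSucc (N : ℕ) : Fin N ↪ ℕ := Fin.valEmbedding.trans (addRightEmbedding 1)

theorem valSucc_apply {N : ℕ} (x : Fin N) : valSucc N x = x + 1 := rfl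

theorem map_valSucc_univ (N : ℕ) : univ.map (valSucc N) = Icc 1 N := by
  ext x
  simp only [mem_Icc, mem_map, mem_univ, true_and, valSucc_apply]
  constructor
  · rintro ⟨i, rfl⟩
    omega
  · rintro ⟨h1, h2⟩
    exact ⟨⟨x - 1, by omega⟩, by simp only; omega⟩

theorem det_descFactorial_orderEmbOfFin {N k : ℕ} {S : Finset (Fin N)} (h : #S = k) :
    (Matrix.of fun i j : Fin k => ((S.orderEmbOfFin h j : ℕ).descFactorial i : ℤ)).det =
      vand (S.map (valSucc _)) := by
  have hv : StrictMono fun i => (S.orderEmbOfFin h i : ℕ) :=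
    fun i j hij => (S.orderEmbOfFin h).strictMono hij
  conv_rhs => rw [← Finset.image_orderEmbOfFin_univ S h, map_eq_image, Finset.image_image]
  rw [← Matrix.det_transpose]
  exact det_descFactorial_eq_vand hv

/-- The generating function of `V_S V_{Sᶜ}` by the sum of the elements of `S`. -/
theorem sum_vand_mul_vand_compl_mul_X_pow (m n : ℕ) :
    ∑ S ∈ powersetCard m (univ : Finset (Fin (m + n))),
      C (vand (S.map (valSucc _)) * vand (Sᶜ.map (valSucc _))) *
        X ^ (∑ x ∈ S, (x : ℕ)) =
      C ((barnesG m : ℤ) * barnesG n) * (X ^ (∑ i ∈ range m, i) * (1 + X) ^ (m * n)) := by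
  let A : Matrix (Fin m) (Fin (m + n)) ℤ[X] :=
    Matrix.of fun a i => (-X) ^ (i : ℕ) * C ((i : ℕ).descFactorial a : ℤ)
  let B : Matrix (Fin n) (Fin (m + n)) ℤ[X] :=
    Matrix.of fun b i => C ((i : ℕ).descFactorial b : ℤ)
  have hlaplace := det_fromRows_laplace finSumFinEquiv A B
    (fun S => (-1) ^ (∑ i ∈ range m, i) *
      (C (vand (S.map (valSucc _)) * vand (Sᶜ.map (valSucc _))) *
        X ^ (∑ x ∈ S, (x : ℕ)))) (by
    intro S hm hn
    have hA : (A.submatrix id (S.orderEmbOfFin hm)).det =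
        (-X) ^ (∑ x ∈ S, (x : ℕ)) * C (vand (S.map (valSucc _))) := by
      rw [← det_descFactorial_orderEmbOfFin hm, RingHom.map_det, coe_sum_eq_sum_orderEmbOfFin hm,
        ← Finset.prod_pow_eq_pow_sum, ← Matrix.det_mul_row]
      rfl
    have hB : (B.submatrix id (Sᶜ.orderEmbOfFin hn)).det =
        C (vand (Sᶜ.map (valSucc _))) := by
      rw [← det_descFactorial_orderEmbOfFin hn, RingHom.map_det]
      rfl
    have hsign := congrArg (Int.cast : ℤ → ℤ[X]) (sign_finSumEquivOfFinset hm hn)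
    push_cast at hsign
    rw [hA, hB, neg_pow (X : ℤ[X]) (∑ x ∈ S, (x : ℕ)), ← hsign, C_mul]
    have hsq : ((Equiv.Perm.sign ((finSumEquivOfFinset hm hn).trans finSumFinEquiv.symm) : ℤ) :
        ℤ[X]) * ((Equiv.Perm.sign ((finSumEquivOfFinset hm hn).trans finSumFinEquiv.symm) : ℤ) :
        ℤ[X]) = 1 := by
      rw [← Int.cast_mul, ← Units.val_mul, Int.units_mul_self]; simp
    linear_combination (-(-1) ^ (∑ i ∈ range m, i) *
      (C (vand (S.map (valSucc _))) * C (vand (Sᶜ.map (valSucc _))) *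
        X ^ (∑ x ∈ S, (x : ℕ)))) * hsq)
  have hscale : (Matrix.fromRows A B).submatrix id finSumFinEquiv = Matrix.of fun s t =>
      (Sum.elim (fun a : Fin m => C ((a : ℕ).factorial : ℤ) * (-X) ^ (a : ℕ))
        (fun b : Fin n => C ((b : ℕ).factorial : ℤ)) s : ℤ[X]) *
      ((Matrix.fromRows
      (Matrix.of fun (a : Fin m) (i : Fin (m + n)) =>
        (-X : ℤ[X]) ^ (i - a : ℕ) * ((i : ℕ).choose a : ℤ[X]))
      (Matrix.of fun (b : Fin n) (i : Fin (m + n)) => ((i : ℕ).choose b : ℤ[X]))).submatrix id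
        finSumFinEquiv) s t := by
    ext1 s t
    rcases s with a | b
    · simp only [A, Matrix.submatrix_apply, id, Matrix.fromRows_apply_inl, Matrix.of_apply,
        Sum.elim_inl, Nat.descFactorial_eq_factorial_mul_choose]
      rcases le_or_gt (a : ℕ) (finSumFinEquiv t : ℕ) with h | h
      · conv_lhs => rw [← Nat.add_sub_cancel' h, pow_add, Nat.add_sub_cancel' h]
        push_cast [C_mul]
        simp
        ring
      · simp [Nat.choose_eq_zero_of_lt h]
    · simp [B, Nat.descFactorial_eq_factorial_mul_choose]
  rw [hscale, Matrix.det_mul_column, det_confluent_vandermonde, Fintype.prod_sum_type,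
    ← mul_sum] at hlaplace
  simp only [Sum.elim_inl, Sum.elim_inr, prod_mul_distrib, Finset.prod_pow_eq_pow_sum,
    ← Finset.sum_range (fun i => i), ← map_prod] at hlaplace
  rw [neg_pow, sub_neg_eq_add] at hlaplace
  have hG : ∀ k : ℕ, ∏ i : Fin k, ((i : ℕ).factorial : ℤ) = barnesG k := by
    intro k
    rw [barnesG, Finset.prod_range]; push_cast; rfl
  rw [hG, hG] at hlaplace
  apply mul_left_cancel₀ (pow_ne_zero (∑ i ∈ range m, i) (neg_ne_zero.2 (one_ne_zero' ℤ[X])))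
  rw [← hlaplace, C_mul]
  ring

theorem stmt0 (m n : ℕ) (hm : 0 < m) (hn : 0 < n) (t : ℕ)
    (h1 : m * (m + 1) / 2 ≤ t) (h2 : t ≤ m * (m + 1) / 2 + m * n) :
    ∑ X ∈ ((Finset.Icc 1 (m + n)).powersetCard m).filter (fun X => ∑ x ∈ X, x = t),
      vand X * vand (Finset.Icc 1 (m + n) \ X)
    = (barnesG m : ℤ) * (barnesG n : ℤ) * (Nat.choose (m * n) (t - m * (m + 1) / 2) : ℤ) := by
  have htri : ∑ i ∈ range m, i + m = m * (m + 1) / 2 := by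
    rw [← Finset.sum_range_succ (fun i => i) m, Finset.sum_range_id, Nat.add_sub_cancel, mul_comm]
  have hcoeff := congrArg (fun p => coeff p (t - m)) (sum_vand_mul_vand_compl_mul_X_pow m n)
  simp only [finsetSum_coeff, coeff_C_mul, coeff_X_pow, coeff_X_pow_mul', coeff_one_add_X_pow]
    at hcoeff
  rw [if_pos (by omega), show t - m - ∑ i ∈ range m, i = t - m * (m + 1) / 2 by omega] at hcoeff
  rw [← hcoeff, sum_filter, ← map_valSucc_univ, powersetCard_map, sum_map]
  refine sum_congr rfl fun S hS => ?_
  have hcard : #S = m := by simpa using hS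
  have hsum : ∑ x ∈ S.map (valSucc _), x = ∑ x ∈ S, (x : ℕ) + m := by
    simp only [sum_map, valSucc_apply, sum_add_distrib, sum_const, hcard, smul_eq_mul, mul_one]
  rw [RelEmbedding.coe_toEmbedding, mapEmbedding_apply, hsum, ← Finset.map_sdiff,
    ← compl_eq_univ_sdiff, mul_ite, mul_one, mul_zero]
  exact if_congr (by omega) rfl rfl
end

section
/- Let m and n be positive integers and let t* be an integer with 0 ≤ t* ≤ mn. Then the number of triples (μ, P, Q), where μ is a Young diagram with exactly t* boxes, P is a semistandard Young tableau of shape μ with entries in {1, 2, ..., m}, and Q is a semistandard Young tableau of the transpose shape μᵀ with entries in {1, 2, ..., n}, equals the binomial coefficient C(mn, t*). -/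
namespace DualRSK

open Finset

/-- A relation that is total and single-valued in both directions is the graph of an equivalence. -/
theorem exists_equiv_of_rel {A B : Type*} (R : A → B → Prop) (hA : ∀ a, ∃ b, R a b)
    (hB : ∀ b, ∃ a, R a b) (hl : ∀ a b b', R a b → R a b' → b = b')
    (hr : ∀ a a' b, R a b → R a' b → a = a') : ∃ e : A ≃ B, ∀ a, R a (e a) := by
  choose f hf using hA
  refine ⟨Equiv.ofBijective f ⟨fun a a' h => hr a a' (f a) (hf a) (h ▸ hf a'), fun b => ?_⟩, hf⟩
  obtain ⟨a, ha⟩ := hB b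
  exact ⟨a, hl a _ _ (hf a) ha⟩

/-! ### Young diagrams through their row lengths -/

theorem rowLen_injective : Function.Injective YoungDiagram.rowLen := by
  intro μ ν h
  ext ⟨i, j⟩
  rw [YoungDiagram.mem_cells, YoungDiagram.mem_cells, YoungDiagram.mem_iff_lt_rowLen,
    YoungDiagram.mem_iff_lt_rowLen, h]

theorem exists_rowLen_eq (f : ℕ → ℕ) (hf : Antitone f) (h0 : ∃ N, f N = 0) :
    ∃ μ : YoungDiagram, μ.rowLen = f := by
  obtain ⟨N, hN⟩ := h0
  let μ : YoungDiagram :=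
    { cells := (range N ×ˢ range (f 0)).filter fun p => p.2 < f p.1
      isLowerSet := by
        rintro ⟨i, j⟩ ⟨i', j'⟩ ⟨hi, hj⟩ h
        simp only [coe_filter, mem_product, mem_range, Set.mem_ofPred_eq] at h hi hj ⊢
        have := hf hi
        omega }
  have hmem (i j : ℕ) : (i, j) ∈ μ ↔ j < f i := by
    rw [← YoungDiagram.mem_cells]
    simp only [μ, mem_filter, mem_product, mem_range]
    refine ⟨fun h => h.2, fun h => ⟨⟨?_, h.trans_le (hf (Nat.zero_le i))⟩, h⟩⟩
    by_contra! hi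
    have := hf hi
    omega
  refine ⟨μ, funext fun i => eq_of_forall_lt_iff fun j => ?_⟩
  rw [← YoungDiagram.mem_iff_lt_rowLen, hmem]

theorem exists_rowLen_eq_zero (μ : YoungDiagram) : ∃ N, ∀ i, N ≤ i → μ.rowLen i = 0 := by
  refine ⟨μ.colLen 0, fun i hi => ?_⟩
  by_contra h
  have : (i, 0) ∈ μ := YoungDiagram.mem_iff_lt_rowLen.2 (Nat.pos_of_ne_zero h)
  rw [YoungDiagram.mem_iff_lt_colLen] at this
  omega

theorem card_eq_sum_rowLen (μ : YoungDiagram) (N : ℕ) (hN : ∀ i, N ≤ i → μ.rowLen i = 0) :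
    μ.card = ∑ i ∈ range N, μ.rowLen i := by
  have hmaps : ∀ p ∈ μ.cells, p.1 ∈ range N := by
    rintro ⟨i, j⟩ h
    rw [YoungDiagram.mem_cells, YoungDiagram.mem_iff_lt_rowLen] at h
    rw [mem_range]
    by_contra! hi
    have := hN i hi
    omega
  rw [YoungDiagram.card, card_eq_sum_card_fiberwise hmaps]
  refine sum_congr rfl fun i _ => ?_
  rw [YoungDiagram.rowLen_eq_card]
  rfl

theorem rowLen_bot (i : ℕ) : (⊥ : YoungDiagram).rowLen i = 0 := by
  by_contra h
  exact YoungDiagram.notMem_bot _ (YoungDiagram.mem_iff_lt_rowLen.2 (Nat.pos_of_ne_zero h))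

theorem transpose_bot : (⊥ : YoungDiagram).transpose = ⊥ := by
  ext p
  simp [YoungDiagram.mem_cells, YoungDiagram.mem_transpose]

/-! ### Horizontal and vertical strips -/

/-- The skew shape `μ / ν` is a horizontal strip. -/
def HStrip (ν μ : YoungDiagram) : Prop :=
  ∀ i, μ.rowLen (i + 1) ≤ ν.rowLen i ∧ ν.rowLen i ≤ μ.rowLen i

/-- The skew shape `μ / ν` is a vertical strip. -/
def VStrip (ν μ : YoungDiagram) : Prop :=
  ∀ i, ν.rowLen i ≤ μ.rowLen i ∧ μ.rowLen i ≤ ν.rowLen i + 1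

theorem hStrip_iff_mem {ν μ : YoungDiagram} :
    HStrip ν μ ↔ ∀ i j, ((i + 1, j) ∈ μ → (i, j) ∈ ν) ∧ ((i, j) ∈ ν → (i, j) ∈ μ) := by
  simp only [HStrip, YoungDiagram.mem_iff_lt_rowLen, forall_and, forall_lt_iff_le]

theorem vStrip_iff_mem {ν μ : YoungDiagram} :
    VStrip ν μ ↔ ∀ i j, ((i, j) ∈ ν → (i, j) ∈ μ) ∧ ((i, j + 1) ∈ μ → (i, j) ∈ ν) := by
  simp only [VStrip, YoungDiagram.mem_iff_lt_rowLen, forall_and, forall_lt_iff_le]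
  refine and_congr_right fun _ => forall_congr' fun i => ⟨fun h j hj => by omega, fun h => ?_⟩
  by_contra! hlt
  have := h (ν.rowLen i) hlt
  omega

theorem hStrip_transpose_iff {ν μ : YoungDiagram} :
    HStrip ν.transpose μ.transpose ↔ VStrip ν μ := by
  simp only [hStrip_iff_mem, vStrip_iff_mem, YoungDiagram.mem_transpose, Prod.swap]
  rw [forall_comm]
  simp only [and_comm]

/-! ### The local rule -/

/-- The local growth rule relating the two ways of completing `α, β` to a square: a carry
`c i ∈ {0, 1}` travels down the rows. -/
structure LocalRule (α β μ ν : YoungDiagram) (c : ℕ → ℕ) : Prop where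
  upper : ∀ i, α.rowLen i ≤ β.rowLen i → μ.rowLen i = β.rowLen i + c i
  lower : ∀ i, α.rowLen i ≤ β.rowLen i → α.rowLen i = ν.rowLen i + c (i + 1)
  upper_forced : ∀ i, β.rowLen i < α.rowLen i → μ.rowLen i = β.rowLen i + 1
  lower_forced : ∀ i, β.rowLen i < α.rowLen i → α.rowLen i = ν.rowLen i + 1
  carry : ∀ i, β.rowLen i < α.rowLen i → c (i + 1) = c i

theorem LocalRule.card_add_card {α β μ ν : YoungDiagram} {c : ℕ → ℕ}
    (h : LocalRule α β μ ν c) : μ.card + ν.card = α.card + β.card + c 0 := by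
  obtain ⟨Na, ha⟩ := exists_rowLen_eq_zero α
  obtain ⟨Nb, hb⟩ := exists_rowLen_eq_zero β
  obtain ⟨Nm, hm⟩ := exists_rowLen_eq_zero μ
  obtain ⟨Nn, hn⟩ := exists_rowLen_eq_zero ν
  have key (N : ℕ) : ∑ i ∈ range N, μ.rowLen i + ∑ i ∈ range N, ν.rowLen i + c N =
      ∑ i ∈ range N, α.rowLen i + ∑ i ∈ range N, β.rowLen i + c 0 := by
    induction N with
    | zero => simp
    | succ N ih =>
      simp only [sum_range_succ]
      rcases le_or_gt (α.rowLen N) (β.rowLen N) with hq | hq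
      · have := h.upper N hq
        have := h.lower N hq
        omega
      · have := h.upper_forced N hq
        have := h.lower_forced N hq
        have := h.carry N hq
        omega
  let N := Na + Nb + Nm + Nn
  have hc : c N = 0 := by
    have h1 := ha N (by omega)
    have h2 := hb N (by omega)
    have h3 := hm N (by omega)
    have := h.upper N (by omega)
    omega
  rw [card_eq_sum_rowLen α N fun i hi => ha i (by omega),
    card_eq_sum_rowLen β N fun i hi => hb i (by omega),
    card_eq_sum_rowLen μ N fun i hi => hm i (by omega),
    card_eq_sum_rowLen ν N fun i hi => hn i (by omega), ← key N, hc, add_zero]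

theorem LocalRule.upper_unique {α β μ μ' ν : YoungDiagram} {c c' : ℕ → ℕ}
    (h : LocalRule α β μ ν c) (h' : LocalRule α β μ' ν c') (h0 : c 0 = c' 0) : μ = μ' := by
  have hc (i : ℕ) : c i = c' i := by
    induction i with
    | zero => exact h0
    | succ i ih =>
      rcases le_or_gt (α.rowLen i) (β.rowLen i) with hq | hq
      · have := h.lower i hq
        have := h'.lower i hq
        omega
      · rw [h.carry i hq, h'.carry i hq, ih]
  refine rowLen_injective (funext fun i => ?_)
  rcases le_or_gt (α.rowLen i) (β.rowLen i) with hq | hq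
  · rw [h.upper i hq, h'.upper i hq, hc]
  · rw [h.upper_forced i hq, h'.upper_forced i hq]

theorem LocalRule.lower_unique {α β μ ν ν' : YoungDiagram} {c c' : ℕ → ℕ}
    (h : LocalRule α β μ ν c) (h' : LocalRule α β μ ν' c') : ν = ν' ∧ c 0 = c' 0 := by
  obtain ⟨N, hN⟩ := exists_rowLen_eq_zero α
  have hc (k i : ℕ) (hk : N ≤ i + k) : c i = c' i := by
    induction k generalizing i with
    | zero =>
      have hq : α.rowLen i ≤ β.rowLen i := by simp [hN i hk]
      have := h.upper i hq
      have := h'.upper i hq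
      omega
    | succ k ih =>
      rcases le_or_gt (α.rowLen i) (β.rowLen i) with hq | hq
      · have := h.upper i hq
        have := h'.upper i hq
        omega
      · rw [← h.carry i hq, ← h'.carry i hq, ih (i + 1) (by omega)]
  refine ⟨rowLen_injective (funext fun i => ?_), hc N 0 (by omega)⟩
  rcases le_or_gt (α.rowLen i) (β.rowLen i) with hq | hq
  · have := h.lower i hq
    have := h'.lower i hq
    have := hc N (i + 1) (by omega)
    omega
  · have := h.lower_forced i hq
    have := h'.lower_forced i hq
    omega

theorem exists_upper {α β ν : YoungDiagram} (hα : VStrip ν α) (hβ : HStrip ν β) {ε : ℕ}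
    (hε : ε ≤ 1) : ∃ (μ : YoungDiagram) (c : ℕ → ℕ),
      HStrip α μ ∧ VStrip β μ ∧ LocalRule α β μ ν c ∧ c 0 = ε := by
  let c : ℕ → ℕ := fun i => Nat.rec ε
    (fun i x => if α.rowLen i ≤ β.rowLen i then α.rowLen i - ν.rowLen i else x) i
  have hsucc (i : ℕ) : c (i + 1) =
      if α.rowLen i ≤ β.rowLen i then α.rowLen i - ν.rowLen i else c i := rfl
  have hc1 (i : ℕ) : c i ≤ 1 := by
    induction i with
    | zero => exact hε
    | succ i ih =>
      have := hα i
      rw [hsucc]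
      split_ifs <;> omega
  have hanti (i : ℕ) : α.rowLen (i + 1) ≤ α.rowLen i ∧ β.rowLen (i + 1) ≤ β.rowLen i :=
    ⟨α.rowLen_anti _ _ i.le_succ, β.rowLen_anti _ _ i.le_succ⟩
  have hcα (i : ℕ) : β.rowLen (i + 1) + c (i + 1) ≤ α.rowLen i := by
    have := hα i
    have := hβ i
    have := hc1 i
    have := hanti i
    rw [hsucc]
    split_ifs <;> omega
  let f : ℕ → ℕ := fun i =>
    if α.rowLen i ≤ β.rowLen i then β.rowLen i + c i else β.rowLen i + 1
  have hf (i : ℕ) : f i = if α.rowLen i ≤ β.rowLen i then β.rowLen i + c i else β.rowLen i + 1 :=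
    rfl
  have hfα (i : ℕ) : f (i + 1) ≤ α.rowLen i ∧ α.rowLen i ≤ f i := by
    have := hα i
    have := hβ i
    have := hanti i
    have := hcα i
    rw [hf, hf]
    constructor <;> split_ifs <;> omega
  obtain ⟨N, hN⟩ := exists_rowLen_eq_zero α
  obtain ⟨μ, hμ⟩ := exists_rowLen_eq f
    (antitone_nat_of_succ_le fun i => (hfα i).1.trans (hfα i).2)
    ⟨N + 1, Nat.le_zero.1 ((hfα N).1.trans (hN N le_rfl).le)⟩
  refine ⟨μ, c, fun i => ?_, fun i => ?_, ⟨fun i hq => ?_, fun i hq => ?_, fun i hq => ?_,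
    fun i hq => ?_, fun i hq => ?_⟩, rfl⟩
  · rw [hμ]
    exact hfα i
  · have := hc1 i
    rw [hμ, hf]
    split_ifs <;> omega
  · rw [hμ, hf, if_pos hq]
  · have := hα i
    rw [hsucc, if_pos hq]
    omega
  · rw [hμ, hf, if_neg hq.not_ge]
  · have := hα i
    have := hβ i
    omega
  · rw [hsucc, if_neg hq.not_ge]

theorem exists_lower {α β μ : YoungDiagram} (hα : HStrip α μ) (hβ : VStrip β μ) :
    ∃ (ν : YoungDiagram) (c : ℕ → ℕ),
      VStrip ν α ∧ HStrip ν β ∧ LocalRule α β μ ν c ∧ c 0 ≤ 1 := by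
  obtain ⟨N, hN⟩ := exists_rowLen_eq_zero α
  let s (i : ℕ) : Set ℕ := {j | i ≤ j ∧ α.rowLen j ≤ β.rowLen j}
  let c : ℕ → ℕ := fun i => μ.rowLen (sInf (s i)) - β.rowLen (sInf (s i))
  have hc (i : ℕ) (hq : α.rowLen i ≤ β.rowLen i) : c i = μ.rowLen i - β.rowLen i := by
    have : sInf (s i) = i := IsLeast.csInf_eq ⟨⟨le_rfl, hq⟩, fun j hj => hj.1⟩
    simp only [c, this]
  have hcarry (i : ℕ) (hq : β.rowLen i < α.rowLen i) : c (i + 1) = c i := by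
    have : s (i + 1) = s i := by
      ext j
      refine ⟨fun h => ⟨i.le_succ.trans h.1, h.2⟩, fun h => ⟨?_, h.2⟩⟩
      rcases h.1.eq_or_lt with rfl | hlt
      · exact absurd h.2 hq.not_ge
      · exact hlt
    simp only [c, this]
  have hc1 (i : ℕ) : c i ≤ 1 := by
    have := hβ (sInf (s i))
    simp only [c]
    omega
  have hanti (i : ℕ) : α.rowLen (i + 1) ≤ α.rowLen i ∧ β.rowLen (i + 1) ≤ β.rowLen i :=
    ⟨α.rowLen_anti _ _ i.le_succ, β.rowLen_anti _ _ i.le_succ⟩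
  have hcα (i : ℕ) : β.rowLen (i + 1) + c (i + 1) ≤ α.rowLen i := by
    have := hα i
    have := hβ (i + 1)
    have := hanti i
    have := hc1 (i + 1)
    rcases le_or_gt (α.rowLen (i + 1)) (β.rowLen (i + 1)) with hq | hq
    · rw [hc _ hq]
      omega
    · omega
  let f : ℕ → ℕ := fun i =>
    if α.rowLen i ≤ β.rowLen i then α.rowLen i - c (i + 1) else α.rowLen i - 1
  have hf (i : ℕ) : f i =
      if α.rowLen i ≤ β.rowLen i then α.rowLen i - c (i + 1) else α.rowLen i - 1 := rfl
  have hfβ (i : ℕ) : β.rowLen (i + 1) ≤ f i ∧ f i ≤ β.rowLen i := by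
    have := hα i
    have := hβ i
    have := hanti i
    have := hcα i
    rw [hf]
    split_ifs <;> omega
  obtain ⟨ν, hν⟩ := exists_rowLen_eq f
    (antitone_nat_of_succ_le fun i => (hfβ (i + 1)).2.trans (hfβ i).1)
    ⟨N, by simp [hf, hN N le_rfl]⟩
  refine ⟨ν, c, fun i => ?_, fun i => ?_, ⟨fun i hq => ?_, fun i hq => ?_, fun i hq => ?_,
    fun i hq => ?_, hcarry⟩, hc1 0⟩
  · have := hc1 (i + 1)
    rw [hν, hf]
    split_ifs <;> omega
  · rw [hν]
    exact hfβ i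
  · have := hβ i
    rw [hc i hq]
    omega
  · have := hcα i
    rw [hν, hf, if_pos hq]
    omega
  · have := hα i
    have := hβ i
    omega
  · rw [hν, hf, if_neg hq.not_ge]
    omega

/-- The commutation relation between adding horizontal strips and removing vertical strips. -/
theorem exists_local_equiv (α β : YoungDiagram) :
    ∃ e : {μ // HStrip α μ ∧ VStrip β μ} ≃ {ν // VStrip ν α ∧ HStrip ν β} × Fin 2,
      ∀ μ, μ.1.card + (e μ).1.1.card = α.card + β.card + (e μ).2 := by
  obtain ⟨e, he⟩ := exists_equiv_of_rel
    (fun (μ : {μ // HStrip α μ ∧ VStrip β μ}) (p : {ν // VStrip ν α ∧ HStrip ν β} × Fin 2) =>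
      ∃ c, LocalRule α β μ.1 p.1.1 c ∧ c 0 = p.2)
    (fun ⟨μ, hα, hβ⟩ => by
      obtain ⟨ν, c, h1, h2, h, h0⟩ := exists_lower hα hβ
      exact ⟨(⟨ν, h1, h2⟩, ⟨c 0, by omega⟩), c, h, rfl⟩)
    (fun ⟨⟨ν, hα, hβ⟩, ε⟩ => by
      obtain ⟨μ, c, h1, h2, h, h0⟩ := exists_upper hα hβ (ε := ε) (by omega)
      exact ⟨⟨μ, h1, h2⟩, c, h, h0⟩)
    (fun μ p p' ⟨c, h, h0⟩ ⟨c', h', h0'⟩ => by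
      obtain ⟨h1, h2⟩ := h.lower_unique h'
      exact Prod.ext (Subtype.ext h1) (Fin.ext (by rw [← h0, ← h0', h2])))
    (fun μ μ' p ⟨c, h, h0⟩ ⟨c', h', h0'⟩ =>
      Subtype.ext (h.upper_unique h' (h0.trans h0'.symm)))
  refine ⟨e, fun μ => ?_⟩
  obtain ⟨c, h, h0⟩ := he μ
  rw [← h0]
  exact h.card_add_card

/-! ### Tableaux with bounded entries -/

/-- `f` is the entry function of a semistandard tableau of shape `μ` with entries in
`{1, …, m}`. -/
structure IsTab (m : ℕ) (μ : YoungDiagram) (f : ℕ → ℕ → ℕ) : Prop where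
  row_weak : ∀ i j1 j2 : ℕ, j1 < j2 → (i, j2) ∈ μ → f i j1 ≤ f i j2
  col_strict : ∀ i1 i2 j : ℕ, i1 < i2 → (i2, j) ∈ μ → f i1 j < f i2 j
  zeros : ∀ i j, (i, j) ∉ μ → f i j = 0
  bounds : ∀ i j, (i, j) ∈ μ → 1 ≤ f i j ∧ f i j ≤ m

/-- Semistandard tableaux of shape `μ` with entries in `{1, …, m}`, as entry functions. -/
abbrev Tab (m : ℕ) (μ : YoungDiagram) : Type := {f : ℕ → ℕ → ℕ // IsTab m μ f}

theorem IsTab.eq_bot {μ : YoungDiagram} {f : ℕ → ℕ → ℕ} (h : IsTab 0 μ f) : μ = ⊥ := by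
  ext ⟨i, j⟩
  rw [YoungDiagram.mem_cells, YoungDiagram.mem_cells]
  refine iff_of_false (fun hm => ?_) (YoungDiagram.notMem_bot _)
  have := h.bounds i j hm
  omega

theorem isTab_bot (m : ℕ) : IsTab m ⊥ fun _ _ => 0 where
  row_weak _ _ _ _ h := absurd h (YoungDiagram.notMem_bot _)
  col_strict _ _ _ _ h := absurd h (YoungDiagram.notMem_bot _)
  zeros _ _ _ := rfl
  bounds _ _ h := absurd h (YoungDiagram.notMem_bot _)

instance subsingleton_tab_zero (μ : YoungDiagram) : Subsingleton (Tab 0 μ) := by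
  refine ⟨fun f g => Subtype.ext (funext₂ fun i j => ?_)⟩
  have hb := f.2.eq_bot
  have hij : (i, j) ∉ μ := hb ▸ YoungDiagram.notMem_bot _
  rw [f.2.zeros i j hij, g.2.zeros i j hij]

/-- `f` is obtained from `g` by filling `μ / ν` with the entry `m + 1`. -/
def Extends (m : ℕ) (μ ν : YoungDiagram) (f g : ℕ → ℕ → ℕ) : Prop :=
  (∀ i j, (i, j) ∈ ν ↔ (i, j) ∈ μ ∧ f i j ≤ m) ∧ (∀ i j, (i, j) ∈ ν → f i j = g i j)

theorem exists_restrict {m : ℕ} {μ : YoungDiagram} {f : ℕ → ℕ → ℕ} (hf : IsTab (m + 1) μ f) :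
    ∃ ν g, HStrip ν μ ∧ IsTab m ν g ∧ Extends m μ ν f g := by
  have hmono {i i' j j' : ℕ} (hi : i ≤ i') (hj : j ≤ j') (h : (i', j') ∈ μ) :
      f i j ≤ f i' j' := by
    have h1 : f i j ≤ f i j' := by
      rcases hj.eq_or_lt with rfl | hlt
      · rfl
      · exact hf.row_weak _ _ _ hlt (μ.up_left_mem hi le_rfl h)
    have h2 : f i j' ≤ f i' j' := by
      rcases hi.eq_or_lt with rfl | hlt
      · rfl
      · exact (hf.col_strict _ _ _ hlt h).le
    exact h1.trans h2
  let ν : YoungDiagram :=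
    { cells := μ.cells.filter fun p => f p.1 p.2 ≤ m
      isLowerSet := by
        rintro ⟨i', j'⟩ ⟨i, j⟩ ⟨hi, hj⟩ h
        simp only [coe_filter, YoungDiagram.mem_cells, Set.mem_ofPred_eq] at h ⊢
        exact ⟨μ.up_left_mem hi hj h.1, (hmono hi hj h.1).trans h.2⟩ }
  have hν (i j : ℕ) : (i, j) ∈ ν ↔ (i, j) ∈ μ ∧ f i j ≤ m := by
    rw [← YoungDiagram.mem_cells]
    simp [ν]
  refine ⟨ν, fun i j => if (i, j) ∈ ν then f i j else 0, hStrip_iff_mem.2 fun i j => ⟨fun h => ?_,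
    fun h => ((hν i j).1 h).1⟩, ⟨fun i j1 j2 hj h => ?_, fun i1 i2 j hi h => ?_,
    fun i j h => if_neg h, fun i j h => ?_⟩, hν, fun i j h => (if_pos h).symm⟩
  · have := hf.col_strict i (i + 1) j i.lt_succ_self h
    have := hf.bounds _ _ h
    exact (hν i j).2 ⟨μ.up_left_mem i.le_succ le_rfl h, by omega⟩
  · simp only [if_pos h, if_pos (ν.up_left_mem le_rfl hj.le h)]
    exact hf.row_weak _ _ _ hj ((hν _ _).1 h).1
  · simp only [if_pos h, if_pos (ν.up_left_mem hi.le le_rfl h)]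
    exact hf.col_strict _ _ _ hi ((hν _ _).1 h).1
  · simp only [if_pos h]
    exact ⟨(hf.bounds _ _ ((hν _ _).1 h).1).1, ((hν _ _).1 h).2⟩

theorem exists_extend {m : ℕ} {μ ν : YoungDiagram} {g : ℕ → ℕ → ℕ} (hs : HStrip ν μ)
    (hg : IsTab m ν g) : ∃ f, IsTab (m + 1) μ f ∧ Extends m μ ν f g := by
  rw [hStrip_iff_mem] at hs
  have hle (i j : ℕ) : g i j ≤ m := by
    by_cases h : (i, j) ∈ ν
    · exact (hg.bounds _ _ h).2
    · simp [hg.zeros _ _ h]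
  refine ⟨fun i j => if (i, j) ∈ ν then g i j else if (i, j) ∈ μ then m + 1 else 0,
    ⟨fun i j1 j2 hj h => ?_, fun i1 i2 j hi h => ?_, fun i j h => ?_, fun i j h => ?_⟩,
    fun i j => ?_, fun i j h => if_pos h⟩
  · have h1 := μ.up_left_mem le_rfl hj.le h
    have := hle i j1
    by_cases hn : (i, j2) ∈ ν
    · simp only [if_pos hn, if_pos (ν.up_left_mem le_rfl hj.le hn)]
      exact hg.row_weak _ _ _ hj hn
    · simp only [if_neg hn, if_pos h, if_pos h1]
      split_ifs <;> omega
  · have hn1 : (i1, j) ∈ ν := (hs i1 j).1 (μ.up_left_mem hi le_rfl h)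
    have := hle i1 j
    by_cases hn : (i2, j) ∈ ν
    · simp only [if_pos hn, if_pos hn1]
      exact hg.col_strict _ _ _ hi hn
    · simp only [if_neg hn, if_pos h, if_pos hn1]
      omega
  · simp only [if_neg h, if_neg fun hn => h ((hs i j).2 hn)]
  · have := hle i j
    by_cases hn : (i, j) ∈ ν
    · simp only [if_pos hn]
      have := hg.bounds _ _ hn
      omega
    · simp only [if_neg hn, if_pos h]
      omega
  · by_cases hn : (i, j) ∈ ν
    · simp only [if_pos hn]
      exact iff_of_true hn ⟨(hs i j).2 hn, hle i j⟩
    · simp only [if_neg hn]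
      refine iff_of_false hn fun h => ?_
      have := h.2
      rw [if_pos h.1] at this
      omega

/-- Removing the entries equal to `m + 1` from a tableau. -/
theorem nonempty_branching_equiv (m : ℕ) (μ : YoungDiagram) :
    Nonempty (Tab (m + 1) μ ≃
      {p : YoungDiagram × (ℕ → ℕ → ℕ) // HStrip p.1 μ ∧ IsTab m p.1 p.2}) := by
  obtain ⟨e, -⟩ := exists_equiv_of_rel
    (fun (f : Tab (m + 1) μ)
      (p : {p : YoungDiagram × (ℕ → ℕ → ℕ) // HStrip p.1 μ ∧ IsTab m p.1 p.2}) =>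
      Extends m μ p.1.1 f.1 p.1.2)
    (fun f => by
      obtain ⟨ν, g, h1, h2, h⟩ := exists_restrict f.2
      exact ⟨⟨(ν, g), h1, h2⟩, h⟩)
    (fun p => by
      obtain ⟨f, hf, h⟩ := exists_extend p.2.1 p.2.2
      exact ⟨⟨f, hf⟩, h⟩)
    (fun f ⟨⟨ν, g⟩, hs, hg⟩ ⟨⟨ν', g'⟩, hs', hg'⟩ h h' => by
      obtain rfl : ν = ν' := by
        ext ⟨i, j⟩
        rw [YoungDiagram.mem_cells, YoungDiagram.mem_cells, h.1 i j, h'.1 i j]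
      refine Subtype.ext (Prod.ext rfl (funext₂ fun i j => ?_))
      by_cases hn : (i, j) ∈ ν
      · exact (h.2 i j hn).symm.trans (h'.2 i j hn)
      · exact (hg.zeros i j hn).trans (hg'.zeros i j hn).symm)
    (fun f f' ⟨⟨ν, g⟩, hs, hg⟩ h h' => by
      refine Subtype.ext (funext₂ fun i j => ?_)
      by_cases hm : (i, j) ∈ μ
      · by_cases hn : (i, j) ∈ ν
        · exact (h.2 i j hn).trans (h'.2 i j hn).symm
        · have h1 := mt (fun hh => (h.1 i j).2 ⟨hm, hh⟩) hn
          have h2 := mt (fun hh => (h'.1 i j).2 ⟨hm, hh⟩) hn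
          have := f.2.bounds i j hm
          have := f'.2.bounds i j hm
          omega
      · rw [f.2.zeros i j hm, f'.2.zeros i j hm])
  exact ⟨e⟩

/-- A dependent pair of subtypes as a subtype of a product. -/
def subtypeProdEquivSigma {A B : Type*} (P : A → Prop) (Q : A → B → Prop) :
    {p : A × B // P p.1 ∧ Q p.1 p.2} ≃ Σ a : {a // P a}, {b // Q a.1 b} where
  toFun p := ⟨⟨p.1.1, p.2.1⟩, ⟨p.1.2, p.2.2⟩⟩
  invFun x := ⟨(x.1.1, x.2.1), x.1.2, x.2.2⟩

theorem nonempty_tab_succ_equiv (m : ℕ) (μ : YoungDiagram) :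
    Nonempty (Tab (m + 1) μ ≃ Σ ν : {ν // HStrip ν μ}, Tab m ν.1) :=
  (nonempty_branching_equiv m μ).map fun e => e.trans
    (subtypeProdEquivSigma (fun ν => HStrip ν μ) fun ν g => IsTab m ν g)

theorem nonempty_tab_transpose_succ_equiv (n : ℕ) (μ : YoungDiagram) :
    Nonempty (Tab (n + 1) μ.transpose ≃ Σ β : {β // VStrip β μ}, Tab n β.1.transpose) := by
  let t : YoungDiagram ≃ YoungDiagram :=
    ⟨YoungDiagram.transpose, YoungDiagram.transpose, YoungDiagram.transpose_transpose,
      YoungDiagram.transpose_transpose⟩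
  refine (nonempty_branching_equiv n μ.transpose).map fun e => e.trans
    ((Equiv.subtypeEquiv (t.prodCongr (Equiv.refl _)) fun p => ?_).trans
      (subtypeProdEquivSigma (fun β => VStrip β μ) fun β g => IsTab n β.transpose g))
  change _ ↔ VStrip p.1.transpose μ ∧ IsTab n p.1.transpose.transpose p.2
  rw [← hStrip_transpose_iff, YoungDiagram.transpose_transpose]

/-! ### The dual Cauchy identity -/

/-- Summing the number of dual tableaux over all horizontal extensions of `α`. -/
theorem exists_hStrip_tab_equiv (n : ℕ) (α : YoungDiagram) :
    ∃ e : (Σ μ : {μ // HStrip α μ}, Tab n μ.1.transpose) ≃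
        Tab n α.transpose × (Fin n → Fin 2),
      ∀ x, x.1.1.card = α.card + ∑ i, ((e x).2 i : ℕ) := by
  induction n generalizing α with
  | zero =>
    have hbot (x : Σ μ : {μ // HStrip α μ}, Tab 0 μ.1.transpose) : x.1.1 = ⊥ := by
      have := x.2.2.eq_bot
      rwa [YoungDiagram.transpose_eq_iff_eq_transpose, transpose_bot] at this
    have hα (x : Σ μ : {μ // HStrip α μ}, Tab 0 μ.1.transpose) : α = ⊥ := by
      refine rowLen_injective (funext fun i => ?_)
      have := (x.1.2 i).2
      rw [hbot x, rowLen_bot] at this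
      rw [rowLen_bot]
      omega
    have : Subsingleton (Σ μ : {μ // HStrip α μ}, Tab 0 μ.1.transpose) := by
      refine ⟨fun x y => ?_⟩
      have h : x.1 = y.1 := Subtype.ext ((hbot x).trans (hbot y).symm)
      obtain ⟨a, f⟩ := x
      obtain ⟨b, g⟩ := y
      obtain rfl : a = b := h
      rw [Subsingleton.elim f g]
    refine ⟨equivOfSubsingletonOfSubsingleton
      (fun x => (⟨fun _ _ => 0, by
        rw [hα x, transpose_bot]; exact isTab_bot 0⟩, Fin.elim0))
      (fun p => ⟨⟨α, ?_⟩, p.1⟩), fun x => ?_⟩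
    · exact fun i => ⟨α.rowLen_anti _ _ i.le_succ, le_rfl⟩
    · simp [hbot x, hα x]
  | succ n ih =>
    choose eA hA using ih
    choose eL hL using exists_local_equiv α
    have eB := fun μ => (nonempty_tab_transpose_succ_equiv n μ).some
    let e₁ : (Σ μ : {μ // HStrip α μ}, Tab (n + 1) μ.1.transpose) ≃
        Σ μ : {μ // HStrip α μ}, Σ β : {β // VStrip β μ.1}, Tab n β.1.transpose :=
      Equiv.sigmaCongrRight fun μ => eB μ.1
    let e₂ : (Σ μ : {μ // HStrip α μ}, Σ β : {β // VStrip β μ.1}, Tab n β.1.transpose) ≃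
        Σ β : YoungDiagram, {μ // HStrip α μ ∧ VStrip β μ} × Tab n β.transpose :=
      { toFun x := ⟨x.2.1.1, ⟨x.1.1, x.1.2, x.2.1.2⟩, x.2.2⟩
        invFun y := ⟨⟨y.2.1.1, y.2.1.2.1⟩, ⟨y.1, y.2.1.2.2⟩, y.2.2⟩ }
    let e₃ : (Σ β : YoungDiagram, {μ // HStrip α μ ∧ VStrip β μ} × Tab n β.transpose) ≃
        Σ β : YoungDiagram, ({ν // VStrip ν α ∧ HStrip ν β} × Fin 2) × Tab n β.transpose :=
      Equiv.sigmaCongrRight fun β => (eL β).prodCongr (Equiv.refl _)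
    let e₄ : (Σ β : YoungDiagram,
          ({ν // VStrip ν α ∧ HStrip ν β} × Fin 2) × Tab n β.transpose) ≃
        Σ ν : {ν // VStrip ν α}, Fin 2 × Σ β : {β // HStrip ν.1 β}, Tab n β.1.transpose :=
      { toFun x := ⟨⟨x.2.1.1.1, x.2.1.1.2.1⟩, x.2.1.2, ⟨x.1, x.2.1.1.2.2⟩, x.2.2⟩
        invFun y := ⟨y.2.2.1.1, (⟨y.1.1, y.1.2, y.2.2.1.2⟩, y.2.1), y.2.2.2⟩ }
    let e₅ : (Σ ν : {ν // VStrip ν α},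
          Fin 2 × Σ β : {β // HStrip ν.1 β}, Tab n β.1.transpose) ≃
        Σ ν : {ν // VStrip ν α}, Fin 2 × (Tab n ν.1.transpose × (Fin n → Fin 2)) :=
      Equiv.sigmaCongrRight fun ν => (Equiv.refl _).prodCongr (eA ν.1)
    let e₆ : (Σ ν : {ν // VStrip ν α}, Fin 2 × (Tab n ν.1.transpose × (Fin n → Fin 2))) ≃
        (Σ ν : {ν // VStrip ν α}, Tab n ν.1.transpose) × (Fin 2 × (Fin n → Fin 2)) :=
      { toFun x := (⟨x.1, x.2.2.1⟩, x.2.1, x.2.2.2)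
        invFun y := ⟨y.1.1, y.2.1, y.1.2, y.2.2⟩ }
    let e₇ : (Σ ν : {ν // VStrip ν α}, Tab n ν.1.transpose) × (Fin 2 × (Fin n → Fin 2)) ≃
        Tab (n + 1) α.transpose × (Fin (n + 1) → Fin 2) :=
      (eB α).symm.prodCongr (Fin.consEquiv fun _ => Fin 2)
    refine ⟨e₁.trans (e₂.trans (e₃.trans (e₄.trans (e₅.trans (e₆.trans e₇))))), fun x => ?_⟩
    obtain ⟨y, hy⟩ : ∃ y, e₁.symm (e₂.symm y) = x := ⟨e₂ (e₁ x), by simp⟩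
    subst hy
    obtain ⟨β, μ, g⟩ := y
    have h1 := hL β μ
    have h2 := hA (eL β μ).1.1 ⟨⟨β, (eL β μ).1.2.2⟩, g⟩
    simp only [Equiv.trans_apply, Equiv.apply_symm_apply, Fin.sum_univ_succ]
    change μ.1.card = α.card + (((eL β μ).2 : ℕ) +
      ∑ i, (((eA (eL β μ).1.1 ⟨⟨β, (eL β μ).1.2.2⟩, g⟩).2 i : Fin 2) : ℕ))
    change β.card = _ at h2
    omega

/-- Pairs of dual tableaux correspond to `0`-`1` matrices, with the size of the shape being the
number of ones. -/
theorem exists_pair_equiv (m n : ℕ) :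
    ∃ e : (Σ μ : YoungDiagram, Tab m μ × Tab n μ.transpose) ≃ (Fin m → Fin n → Fin 2),
      ∀ x, x.1.card = ∑ i, ∑ j, (e x i j : ℕ) := by
  induction m with
  | zero =>
    have hbot (x : Σ μ : YoungDiagram, Tab 0 μ × Tab n μ.transpose) : x.1 = ⊥ := x.2.1.2.eq_bot
    have : Subsingleton (Σ μ : YoungDiagram, Tab 0 μ × Tab n μ.transpose) := by
      refine ⟨fun x y => ?_⟩
      have hx := hbot x
      have hy := hbot y
      obtain ⟨a, f, g⟩ := x
      obtain ⟨b, f', g'⟩ := y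
      obtain rfl : a = ⊥ := hx
      obtain rfl : b = ⊥ := hy
      rw [Subsingleton.elim f f']
      have : g = g' := Subtype.ext (funext₂ fun i j => by
        have hij : (i, j) ∉ (⊥ : YoungDiagram).transpose := by
          rw [transpose_bot]
          exact YoungDiagram.notMem_bot _
        rw [g.2.zeros i j hij, g'.2.zeros i j hij])
      rw [this]
    refine ⟨equivOfSubsingletonOfSubsingleton (fun _ => Fin.elim0)
      (fun _ => ⟨⊥, ⟨_, isTab_bot 0⟩, ⟨fun _ _ => 0, ?_⟩⟩), fun x => ?_⟩
    · rw [transpose_bot]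
      exact isTab_bot n
    · simp [hbot x]
  | succ m ih =>
    obtain ⟨eI, hI⟩ := ih
    choose eA hA using exists_hStrip_tab_equiv n
    have eB := fun μ => (nonempty_tab_succ_equiv m μ).some
    let e₁ : (Σ μ : YoungDiagram, Tab (m + 1) μ × Tab n μ.transpose) ≃
        Σ μ : YoungDiagram, (Σ ν : {ν // HStrip ν μ}, Tab m ν.1) × Tab n μ.transpose :=
      Equiv.sigmaCongrRight fun μ => (eB μ).prodCongr (Equiv.refl _)
    let e₂ : (Σ μ : YoungDiagram, (Σ ν : {ν // HStrip ν μ}, Tab m ν.1) × Tab n μ.transpose) ≃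
        Σ ν : YoungDiagram, Tab m ν × Σ μ : {μ // HStrip ν μ}, Tab n μ.1.transpose :=
      { toFun x := ⟨x.2.1.1.1, x.2.1.2, ⟨x.1, x.2.1.1.2⟩, x.2.2⟩
        invFun y := ⟨y.2.2.1.1, ⟨⟨y.1, y.2.2.1.2⟩, y.2.1⟩, y.2.2.2⟩ }
    let e₃ : (Σ ν : YoungDiagram, Tab m ν × Σ μ : {μ // HStrip ν μ}, Tab n μ.1.transpose) ≃
        Σ ν : YoungDiagram, Tab m ν × (Tab n ν.transpose × (Fin n → Fin 2)) :=
      Equiv.sigmaCongrRight fun ν => (Equiv.refl _).prodCongr (eA ν)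
    let e₄ : (Σ ν : YoungDiagram, Tab m ν × (Tab n ν.transpose × (Fin n → Fin 2))) ≃
        (Fin n → Fin 2) × (Σ ν : YoungDiagram, Tab m ν × Tab n ν.transpose) :=
      { toFun x := (x.2.2.2, ⟨x.1, x.2.1, x.2.2.1⟩)
        invFun y := ⟨y.2.1, y.2.2.1, y.2.2.2, y.1⟩ }
    let e₅ : (Fin n → Fin 2) × (Σ ν : YoungDiagram, Tab m ν × Tab n ν.transpose) ≃
        (Fin (m + 1) → Fin n → Fin 2) :=
      ((Equiv.refl _).prodCongr eI).trans (Fin.consEquiv fun _ => Fin n → Fin 2)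
    refine ⟨e₁.trans (e₂.trans (e₃.trans (e₄.trans e₅))), fun x => ?_⟩
    obtain ⟨y, hy⟩ : ∃ y, e₁.symm (e₂.symm y) = x := ⟨e₂ (e₁ x), by simp⟩
    subst hy
    obtain ⟨ν, f, z⟩ := y
    have h1 := hA ν z
    have h2 := hI ⟨ν, f, (eA ν z).1⟩
    simp only [Equiv.trans_apply, Equiv.apply_symm_apply, Fin.sum_univ_succ]
    change z.1.1.card = ∑ j, (((eA ν z).2 j : Fin 2) : ℕ) +
      ∑ i, ∑ j, (eI ⟨ν, f, (eA ν z).1⟩ i j : ℕ)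
    change ν.card = _ at h2
    omega

theorem card_matrices_sum_eq (m n t : ℕ) :
    Nat.card {b : Fin m → Fin n → Fin 2 // ∑ i, ∑ j, (b i j : ℕ) = t} = (m * n).choose t := by
  let e : (Fin m → Fin n → Fin 2) ≃ Finset (Fin m × Fin n) :=
    { toFun b := univ.filter fun p => b p.1 p.2 = 1
      invFun s i j := if (i, j) ∈ s then 1 else 0
      left_inv b := by
        ext i j
        have := (b i j).2
        simp only [mem_filter, mem_univ, true_and]
        split_ifs with h
        · rw [h]
        · rw [Fin.ext_iff] at h
          simp only [Fin.val_zero, Fin.val_one] at h ⊢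
          omega
      right_inv s := by
        ext p
        simp }
  have he (b : Fin m → Fin n → Fin 2) : (e b).card = ∑ i, ∑ j, (b i j : ℕ) := by
    rw [← Fintype.sum_prod_type' fun i j => (b i j : ℕ)]
    simp only [e, Equiv.coe_fn_mk, card_filter]
    refine sum_congr rfl fun p _ => ?_
    generalize b p.1 p.2 = x
    fin_cases x <;> rfl
  rw [Nat.card_congr (Equiv.subtypeEquiv (q := fun s : Finset (Fin m × Fin n) => s.card = t) e
    fun b => by rw [he])]
  rw [Nat.card_eq_fintype_card, Fintype.card_finset_len]
  simp

/-- Tableaux with bounded entries as entry functions. -/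
def ssytEquivTab (m : ℕ) (μ : YoungDiagram) :
    {T : SemistandardYoungTableau μ // ∀ i j, (i, j) ∈ μ → 1 ≤ T i j ∧ T i j ≤ m} ≃ Tab m μ where
  toFun T := ⟨T.1.entry, fun _ _ _ => T.1.row_weak', fun _ _ _ => T.1.col_strict',
    fun _ _ => T.1.zeros', T.2⟩
  invFun f := ⟨⟨f.1, f.2.row_weak _ _ _, f.2.col_strict _ _ _, f.2.zeros _ _⟩, f.2.bounds⟩

end DualRSK

theorem stmt8 (m n t' : ℕ) (hm : 0 < m) (hn : 0 < n) (ht : t' ≤ m * n) :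
    Nat.card {p : Σ μ : YoungDiagram,
        SemistandardYoungTableau μ × SemistandardYoungTableau μ.transpose //
      p.1.card = t' ∧
      (∀ i j, (i, j) ∈ p.1 → 1 ≤ p.2.1 i j ∧ p.2.1 i j ≤ m) ∧
      (∀ i j, (i, j) ∈ p.1.transpose → 1 ≤ p.2.2 i j ∧ p.2.2 i j ≤ n)}
    = Nat.choose (m * n) t' := by
  obtain ⟨e, he⟩ := DualRSK.exists_pair_equiv m n
  let e' : {p : Σ μ : YoungDiagram,
        SemistandardYoungTableau μ × SemistandardYoungTableau μ.transpose //
      p.1.card = t' ∧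
      (∀ i j, (i, j) ∈ p.1 → 1 ≤ p.2.1 i j ∧ p.2.1 i j ≤ m) ∧
      (∀ i j, (i, j) ∈ p.1.transpose → 1 ≤ p.2.2 i j ∧ p.2.2 i j ≤ n)} ≃
      {x : Σ μ : YoungDiagram, DualRSK.Tab m μ × DualRSK.Tab n μ.transpose // x.1.card = t'} :=
    { toFun p := ⟨⟨p.1.1, DualRSK.ssytEquivTab m _ ⟨p.1.2.1, p.2.2.1⟩,
        DualRSK.ssytEquivTab n _ ⟨p.1.2.2, p.2.2.2⟩⟩, p.2.1⟩
      invFun x := ⟨⟨x.1.1, ((DualRSK.ssytEquivTab m _).symm x.1.2.1).1,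
        ((DualRSK.ssytEquivTab n _).symm x.1.2.2).1⟩, x.2,
        ((DualRSK.ssytEquivTab m _).symm x.1.2.1).2, ((DualRSK.ssytEquivTab n _).symm x.1.2.2).2⟩ }
  rw [Nat.card_congr e', ← DualRSK.card_matrices_sum_eq m n t']
  exact Nat.card_congr (Equiv.subtypeEquiv e fun x => by rw [he])
end
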